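/- Let Ω be a nonempty finite set, p a full-support probability vector on Ω, n ≥ 1, and for each ω ∈ Ω let v^ω : Δ(Ω)^n → ℝ be bounded and upper semicontinuous. Then the supremum defining the value of the persuasion problem is attained: there exists a feasible collection (μ^ω)_{ω∈Ω} of conditional belief distributions for prior p such that ∑_{ω∈Ω} p(ω)·∫ v^ω dμ^ω = Val. -/

import Mathlib

open MeasureTheory

noncomputable section

abbrev Belief (Ω : Type) [Fintype Ω] : Type := stdSimplex ℝ Ω

variable {Ω : Type} [Fintype Ω] [MeasurableSpace Ω] [MeasurableSingletonClass Ω]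

/-- The joint distribution of state and beliefs. -/
def jointP (p : Ω → ℝ) {X : Type} [MeasurableSpace X] (μ : Ω → Measure X) :
    Measure (Ω × X) :=
  ∑ ω : Ω, ENNReal.ofReal (p ω) • ((Measure.dirac ω).prod (μ ω))

/-- Feasibility of a collection of conditional belief distributions, n receivers. -/
def Feasible (p : Ω → ℝ) (n : ℕ) (μ : Ω → Measure (Fin n → Belief Ω)) : Prop :=
  (∀ ω, IsProbabilityMeasure (μ ω)) ∧
  ∀ (i : Fin n) (ω' : Ω),
    (fun z : Ω × (Fin n → Belief Ω) => (z.2 i).1 ω')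
      =ᵐ[jointP p μ]
      (jointP p μ)[Set.indicator {z : Ω × (Fin n → Belief Ω) | z.1 = ω'} (fun _ => (1 : ℝ)) |
        MeasurableSpace.comap (fun z : Ω × (Fin n → Belief Ω) => z.2 i) inferInstance]

/-- Feasibility of a collection of conditional belief distributions, single receiver. -/
def Feasible1 (p : Ω → ℝ) (lam : Ω → Measure (Belief Ω)) : Prop :=
  (∀ ω, IsProbabilityMeasure (lam ω)) ∧
  ∀ ω' : Ω,
    (fun z : Ω × Belief Ω => (z.2).1 ω')
      =ᵐ[jointP p lam]
      (jointP p lam)[Set.indicator {z : Ω × Belief Ω | z.1 = ω'} (fun _ => (1 : ℝ)) |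
        MeasurableSpace.comap (fun z : Ω × Belief Ω => z.2) inferInstance]

/-- the value of the persuasion problem -/
def Val (p : Ω → ℝ) (n : ℕ) (v : Ω → (Fin n → Belief Ω) → ℝ) : ℝ :=
  sSup { r | ∃ μ : Ω → Measure (Fin n → Belief Ω),
    Feasible p n μ ∧ r = ∑ ω : Ω, p ω * ∫ x, v ω x ∂(μ ω) }

end

open Filter Topology BoundedContinuousFunction

/-- Upper approximation of a bounded u.s.c. function by Lipschitz functions. -/
lemma usc_approx {X : Type} [MetricSpace X] (v : X → ℝ) (C : ℝ) (hC : ∀ x, |v x| ≤ C)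
    (hv : UpperSemicontinuous v) :
    ∃ f : ℕ → X → ℝ, (∀ k, Continuous (f k)) ∧ (∀ k x, v x ≤ f k x) ∧ (∀ k x, f k x ≤ C) ∧
      ∀ x, Tendsto (fun k => f k x) atTop (𝓝 (v x)) := by
  have hb : ∀ (k : ℕ) (x : X), BddAbove (Set.range fun y => v y - k * dist x y) := by
    intro k x
    refine ⟨C, ?_⟩
    rintro _ ⟨y, rfl⟩
    have := (abs_le.1 (hC y)).2
    have : 0 ≤ (k : ℝ) * dist x y := by positivity
    simp only
    linarith
  have hle : ∀ (k : ℕ) (x : X), v x ≤ ⨆ y, (v y - k * dist x y) := by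
    intro k x
    have := le_ciSup (hb k x) x
    simpa using this
  refine ⟨fun k x => ⨆ y, (v y - k * dist x y), ?_, hle, ?_, ?_⟩
  · intro k
    have : LipschitzWith (k : NNReal) (fun x => ⨆ y, (v y - k * dist x y)) := by
      refine LipschitzWith.of_le_add_mul _ ?_
      intro x x'
      have : Nonempty X := ⟨x⟩
      refine ciSup_le fun y => ?_
      have h1 := le_ciSup (hb k x') y
      have h2 : dist x' y ≤ dist x x' + dist x y := by
        rw [dist_comm x x']; exact dist_triangle _ _ _
      have h3 := mul_le_mul_of_nonneg_left h2 (Nat.cast_nonneg (α := ℝ) k)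
      simp only [NNReal.coe_natCast]
      linarith
    exact this.continuous
  · intro k x
    have : Nonempty X := ⟨x⟩
    refine ciSup_le fun y => ?_
    have := (abs_le.1 (hC y)).2
    have : 0 ≤ (k : ℝ) * dist x y := by positivity
    linarith
  · intro x
    have : Nonempty X := ⟨x⟩
    rw [tendsto_order]
    constructor
    · intro a ha
      exact Eventually.of_forall fun k => ha.trans_le (hle k x)
    · intro a ha
      obtain ⟨b, hb1, hb2⟩ := exists_between ha
      obtain ⟨δ, hδ, hδ'⟩ := Metric.eventually_nhds_iff.1 (hv x b hb1)
      obtain ⟨K, hK⟩ := exists_nat_gt (2 * C / δ)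
      refine eventually_atTop.2 ⟨K, fun k hk => ?_⟩
      refine lt_of_le_of_lt (ciSup_le fun y => ?_) hb2
      by_cases hy : dist y x < δ
      · have := hδ' hy
        have : 0 ≤ (k : ℝ) * dist x y := by positivity
        linarith
      · have h1 : (K : ℝ) ≤ k := by exact_mod_cast hk
        have h2 : 2 * C < K * δ := by rwa [div_lt_iff₀ hδ] at hK
        have h3 : (K : ℝ) * δ ≤ k * dist x y := by
          rw [dist_comm x y]
          exact mul_le_mul h1 (not_lt.1 hy) hδ.le (Nat.cast_nonneg k)
        have := (abs_le.1 (hC y)).2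
        have := (abs_le.1 (hC x)).1
        linarith

lemma usc_integral {X : Type} [MetricSpace X] [MeasurableSpace X] [BorelSpace X]
    (v : X → ℝ) (C : ℝ) (hC : ∀ x, |v x| ≤ C) (hv : UpperSemicontinuous v) :
    UpperSemicontinuous (fun μ : ProbabilityMeasure X => ∫ x, v x ∂(μ : Measure X)) := by
  obtain ⟨f, hfc, hvf, hfC, hft⟩ := usc_approx v C hC hv
  have hfb : ∀ k x, |f k x| ≤ C := fun k x =>
    abs_le.2 ⟨(abs_le.1 (hC x)).1.trans (hvf k x), hfC k x⟩
  have hvm : Measurable v := hv.measurable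
  intro μ a ha
  have hlim : Tendsto (fun k => ∫ x, f k x ∂(μ : Measure X)) atTop
      (𝓝 (∫ x, v x ∂(μ : Measure X))) := by
    refine tendsto_integral_of_dominated_convergence (fun _ => C)
      (fun k => (hfc k).measurable.aestronglyMeasurable) (integrable_const _) ?_ ?_
    · exact fun k => Eventually.of_forall fun x => hfb k x
    · exact Eventually.of_forall hft
  obtain ⟨k, hk⟩ := (hlim.eventually (gt_mem_nhds ha)).exists
  let F : X →ᵇ ℝ := BoundedContinuousFunction.ofNormedAddCommGroup (f k) (hfc k) C (hfb k)
  have hcont := (ProbabilityMeasure.tendsto_iff_forall_integral_tendsto.1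
    (tendsto_id (α := ProbabilityMeasure X) (x := 𝓝 μ))) F
  filter_upwards [hcont.eventually (gt_mem_nhds hk)] with ν hν
  refine lt_of_le_of_lt ?_ hν
  refine integral_mono ?_ ?_ (fun x => hvf k x)
  · exact Integrable.of_bound hvm.aestronglyMeasurable C (Eventually.of_forall hC)
  · exact Integrable.of_bound (hfc k).measurable.aestronglyMeasurable C
      (Eventually.of_forall (hfb k))

lemma condExp_char {Z B : Type} [MeasurableSpace Z] [MetricSpace B] [MeasurableSpace B]
    [BorelSpace B] (P : Measure Z) [IsFiniteMeasure P] (q : Z → B) (hq : Measurable q)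
    (h : B → ℝ) (hh : Continuous h) (h0 : ∀ b, 0 ≤ h b) (h1 : ∀ b, h b ≤ 1)
    (s : Set Z) (hs : MeasurableSet s) :
    ((fun z => h (q z)) =ᵐ[P] P[s.indicator (fun _ => (1 : ℝ)) | MeasurableSpace.comap q inferInstance])
    ↔ ∀ f : B →ᵇ ℝ, ∫ z, f (q z) * h (q z) ∂P
        = ∫ z, f (q z) * s.indicator (fun _ => (1 : ℝ)) z ∂P := by
  have hle : MeasurableSpace.comap q inferInstance ≤ (inferInstance : MeasurableSpace Z) :=
    hq.comap_le
  have hind : Integrable (s.indicator (fun _ => (1 : ℝ))) P :=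
    (integrable_const 1).indicator hs
  have hhint : Integrable (fun z => h (q z)) P :=
    Integrable.of_bound (hh.measurable.comp hq).aestronglyMeasurable 1
      (Eventually.of_forall fun z => by
        rw [Real.norm_eq_abs, abs_of_nonneg (h0 _)]; exact h1 _)
  constructor
  · intro H f
    have hfm : StronglyMeasurable[MeasurableSpace.comap q inferInstance] (fun z => f (q z)) :=
      (f.continuous.measurable.comp (comap_measurable q)).stronglyMeasurable
    have hpull := condExp_stronglyMeasurable_mul_of_bound hle hfm hind ‖f‖
      (Eventually.of_forall fun z => f.norm_coe_le_norm _)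
    calc ∫ z, f (q z) * h (q z) ∂P
        = ∫ z, (P[(fun z => f (q z)) * s.indicator (fun _ => (1 : ℝ)) |
            MeasurableSpace.comap q inferInstance]) z ∂P := by
          refine integral_congr_ae ?_
          filter_upwards [H, hpull] with z hz1 hz2
          rw [hz2, Pi.mul_apply, ← hz1]
      _ = _ := by
          rw [integral_condExp hle]; rfl
  · intro H
    let ν₁ : Measure B := (P.restrict s).map q
    let ν₂ : Measure B := (P.withDensity fun z => ENNReal.ofReal (h (q z))).map q
    have hdm : Measurable fun z => ENNReal.ofReal (h (q z)) := (hh.measurable.comp hq).ennreal_ofReal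
    have : IsFiniteMeasure (P.withDensity fun z => ENNReal.ofReal (h (q z))) :=
      isFiniteMeasure_withDensity_ofReal hhint.2
    have hν : ν₂ = ν₁ := by
      refine ext_of_forall_integral_eq_of_IsFiniteMeasure fun f => ?_
      rw [integral_map hq.aemeasurable f.continuous.measurable.aestronglyMeasurable,
        integral_map hq.aemeasurable f.continuous.measurable.aestronglyMeasurable,
        integral_withDensity_eq_integral_toReal_smul hdm
          (Eventually.of_forall fun _ => ENNReal.ofReal_lt_top), ← integral_indicator hs]
      have := H f
      calc _ = ∫ z, f (q z) * h (q z) ∂P := by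
            refine integral_congr_ae (Eventually.of_forall fun z => ?_)
            simp only [smul_eq_mul]
            rw [ENNReal.toReal_ofReal (h0 _), mul_comm]
        _ = _ := this
        _ = _ := by
            refine integral_congr_ae (Eventually.of_forall fun z => ?_)
            by_cases hz : z ∈ s <;> simp [hz]
    refine ae_eq_condExp_of_forall_setIntegral_eq hle hind (fun t _ _ => hhint.integrableOn) ?_
      (hh.measurable.comp (comap_measurable q)).stronglyMeasurable.aestronglyMeasurable
    rintro _ ⟨A, hA, rfl⟩ -
    have hAm := hq hA
    have e := congrArg (fun ν : Measure B => ν A) hν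
    simp only [ν₁, ν₂] at e
    rw [Measure.map_apply hq hA, Measure.map_apply hq hA, withDensity_apply _ hAm,
      ← ofReal_integral_eq_lintegral_ofReal hhint.integrableOn
        (Eventually.of_forall fun z => h0 _), Measure.restrict_apply hAm] at e
    rw [setIntegral_indicator hs, setIntegral_const, smul_eq_mul, mul_one, measureReal_def, ← e,
      ENNReal.toReal_ofReal (integral_nonneg fun z => h0 _)]

section
variable {Ω : Type} [Fintype Ω] [MeasurableSpace Ω] [MeasurableSingletonClass Ω]

instance jointP_finite (p : Ω → ℝ) {X : Type} [MeasurableSpace X] (μ : Ω → Measure X)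
    [∀ ω, IsProbabilityMeasure (μ ω)] : IsFiniteMeasure (jointP p μ) := by
  constructor
  simp [jointP]

lemma integral_jointP (p : Ω → ℝ) (hp : ∀ ω, 0 < p ω) {X : Type} [MeasurableSpace X]
    (μ : Ω → Measure X) [∀ ω, IsProbabilityMeasure (μ ω)] (g : Ω × X → ℝ) (hg : Measurable g)
    (C : ℝ) (hC : ∀ z, |g z| ≤ C) :
    ∫ z, g z ∂(jointP p μ) = ∑ ω, p ω * ∫ x, g (ω, x) ∂(μ ω) := by
  unfold jointP
  rw [integral_finsetSum_measure]
  · refine Finset.sum_congr rfl fun ω _ => ?_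
    rw [integral_smul_measure, Measure.dirac_prod,
      integral_map measurable_prodMk_left.aemeasurable hg.aestronglyMeasurable,
      ENNReal.toReal_ofReal (hp ω).le, smul_eq_mul]
  · intro ω _
    refine Integrable.smul_measure ?_ ENNReal.ofReal_ne_top
    exact Integrable.of_bound hg.aestronglyMeasurable C (Eventually.of_forall hC)

lemma belief_cont (ω' : Ω) : Continuous fun b : Belief Ω => b.1 ω' :=
  (continuous_apply ω').comp continuous_subtype_val

lemma belief_le_one (b : Belief Ω) (ω' : Ω) : b.1 ω' ≤ 1 := by
  rw [← b.2.2]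
  exact Finset.single_le_sum (fun i _ => b.2.1 i) (Finset.mem_univ ω')

open Classical in
lemma feasible_iff (p : Ω → ℝ) (hp : ∀ ω, 0 < p ω) (n : ℕ)
    (μ : Ω → Measure (Fin n → Belief Ω)) [∀ ω, IsProbabilityMeasure (μ ω)] :
    Feasible p n μ ↔ ∀ (i : Fin n) (ω' : Ω) (f : Belief Ω →ᵇ ℝ),
      ∑ ω, p ω * ∫ x, f (x i) * (x i).1 ω' ∂(μ ω)
        = ∑ ω, p ω * ∫ x, f (x i) * (if ω = ω' then 1 else 0) ∂(μ ω) := by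
  unfold Feasible
  have hpm : ∀ ω, IsProbabilityMeasure (μ ω) := inferInstance
  rw [and_iff_right hpm]
  refine forall_congr' fun i => forall_congr' fun ω' => ?_
  have hq : Measurable fun z : Ω × (Fin n → Belief Ω) => z.2 i :=
    (measurable_pi_apply i).comp measurable_snd
  have hs : MeasurableSet {z : Ω × (Fin n → Belief Ω) | z.1 = ω'} :=
    measurable_fst (measurableSet_singleton ω')
  rw [condExp_char (jointP p μ) (fun z => z.2 i) hq (fun b => b.1 ω') (belief_cont ω')
    (fun b => b.2.1 ω') (fun b => belief_le_one b ω') _ hs]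
  refine forall_congr' fun f => ?_
  have hfm : Measurable fun z : Ω × (Fin n → Belief Ω) => f (z.2 i) :=
    f.continuous.measurable.comp hq
  rw [integral_jointP p hp μ (fun z => f (z.2 i) * (z.2 i).1 ω') (hfm.mul ((belief_cont ω').measurable.comp hq)) ‖f‖,
    integral_jointP p hp μ
      (fun z => f (z.2 i) * Set.indicator {z : Ω × (Fin n → Belief Ω) | z.1 = ω'} (fun _ => (1 : ℝ)) z)
      (hfm.mul (measurable_const.indicator hs)) ‖f‖]
  · simp [Set.indicator_apply]
  · intro z
    rw [abs_mul]
    have h1 : |f (z.2 i)| ≤ ‖f‖ := f.norm_coe_le_norm _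
    have h2 : |Set.indicator {z : Ω × (Fin n → Belief Ω) | z.1 = ω'} (fun _ => (1 : ℝ)) z| ≤ 1 := by
      rw [Set.indicator_apply]; split_ifs <;> simp
    simpa using mul_le_mul h1 h2 (abs_nonneg _) (norm_nonneg _)
  · intro z
    rw [abs_mul]
    have h1 : |f (z.2 i)| ≤ ‖f‖ := f.norm_coe_le_norm _
    have h2 : |(z.2 i).1 ω'| ≤ 1 := by
      rw [abs_of_nonneg ((z.2 i).2.1 ω')]; exact belief_le_one _ _
    simpa using mul_le_mul h1 h2 (abs_nonneg _) (norm_nonneg _)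

lemma cont_integral {X : Type} [TopologicalSpace X] [CompactSpace X] [MeasurableSpace X]
    [OpensMeasurableSpace X] (g : X → ℝ) (hg : Continuous g) :
    Continuous fun μ : ProbabilityMeasure X => ∫ x, g x ∂(μ : Measure X) := by
  rw [continuous_iff_continuousAt]
  intro μ
  exact (ProbabilityMeasure.tendsto_iff_forall_integral_tendsto.1
    (tendsto_id (α := ProbabilityMeasure X) (x := 𝓝 μ))) (BoundedContinuousFunction.mkOfCompact ⟨g, hg⟩)
end

/-- the supremum defining the value of the persuasion problem is attained. -/
theorem value_attained
    {Ω : Type} [Fintype Ω] [Nonempty Ω] [MeasurableSpace Ω] [MeasurableSingletonClass Ω]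
    (p : Ω → ℝ) (hp : ∀ ω, 0 < p ω) (hpsum : ∑ ω : Ω, p ω = 1)
    (n : ℕ) (hn : 1 ≤ n)
    (v : Ω → (Fin n → Belief Ω) → ℝ)
    (hvb : ∃ C : ℝ, ∀ ω x, |v ω x| ≤ C)
    (hvusc : ∀ ω, UpperSemicontinuous (v ω)) :
    ∃ μ : Ω → Measure (Fin n → Belief Ω), Feasible p n μ ∧
      ∑ ω : Ω, p ω * ∫ x, v ω x ∂(μ ω) = Val p n v := by
  classical
  obtain ⟨C, hC⟩ := hvb
  have : CompactSpace (Belief Ω) := isCompact_iff_compactSpace.1 (isCompact_stdSimplex ℝ Ω)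
  let S : Set (Ω → ProbabilityMeasure (Fin n → Belief Ω)) :=
    {m | Feasible p n (fun ω => (m ω : Measure (Fin n → Belief Ω)))}
  have hSc : IsClosed S := by
    have : S = ⋂ (i : Fin n) (ω' : Ω) (f : Belief Ω →ᵇ ℝ),
        {m | ∑ ω, p ω * ∫ x, f (x i) * (x i).1 ω' ∂(m ω : Measure (Fin n → Belief Ω))
          = ∑ ω, p ω * ∫ x, f (x i) * (if ω = ω' then 1 else 0)
              ∂(m ω : Measure (Fin n → Belief Ω))} := by
      ext m
      simp only [Set.mem_iInter]
      exact feasible_iff p hp n _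
    rw [this]
    refine isClosed_iInter fun i => isClosed_iInter fun ω' => isClosed_iInter fun f => ?_
    have hfi : Continuous fun x : Fin n → Belief Ω => f (x i) :=
      f.continuous.comp (continuous_apply i)
    refine isClosed_eq ?_ ?_
    · refine continuous_finsetSum _ fun ω _ => continuous_const.mul ?_
      exact (cont_integral _ (hfi.mul ((belief_cont ω').comp (continuous_apply i)))).comp
        (continuous_apply ω)
    · refine continuous_finsetSum _ fun ω _ => continuous_const.mul ?_
      exact (cont_integral _ (hfi.mul continuous_const)).comp (continuous_apply ω)
  have hSne : S.Nonempty := by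
    let b : Belief Ω := ⟨p, fun ω => (hp ω).le, hpsum⟩
    refine ⟨fun _ => ⟨Measure.dirac (fun _ => b), inferInstance⟩, ?_⟩
    refine (feasible_iff p hp n (fun _ => Measure.dirac (fun _ => b))).2 ?_
    intro i ω' f
    simp only [integral_dirac]
    simp [b, ← Finset.sum_mul, hpsum, mul_comm]
  have hJ : UpperSemicontinuous fun m : Ω → ProbabilityMeasure (Fin n → Belief Ω) =>
      ∑ ω, p ω * ∫ x, v ω x ∂(m ω : Measure (Fin n → Belief Ω)) := by
    refine upperSemicontinuous_sum fun ω _ => ?_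
    intro m a ha
    have h1 := usc_integral (v ω) C (hC ω) (hvusc ω) (m ω) (a / p ω)
      (by change _ < _ / _; rw [lt_div_iff₀ (hp ω), mul_comm]; exact ha)
    filter_upwards [(continuous_apply ω).continuousAt.eventually h1] with m' hm'
    change _ < _ / _ at hm'
    rwa [lt_div_iff₀ (hp ω), mul_comm] at hm'
  obtain ⟨m, hm, hmax⟩ := (hJ.upperSemicontinuousOn S).exists_isMaxOn hSne hSc.isCompact
  refine ⟨fun ω => (m ω : Measure (Fin n → Belief Ω)), hm, ?_⟩
  symm
  refine IsGreatest.csSup_eq ⟨⟨_, hm, rfl⟩, ?_⟩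
  rintro r ⟨μ, hμ, rfl⟩
  exact hmax (show (fun ω => (⟨μ ω, hμ.1 ω⟩ : ProbabilityMeasure (Fin n → Belief Ω))) ∈ S from hμ)
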